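/- arXiv:cs/0102025 — 12 statements merged into one kernel-verified Lean document; each statement's English description precedes it below -/
import Mathlib

section
/- For every LO program P and contexts Δ, Δ' with Δ ≼ Δ' (multiset inclusion), if the sequent P ⇒ Δ is provable in LO then the sequent P ⇒ Δ' is provable in LO (admissibility of weakening in LO). -/
/-- LO goals over a signature `σ`: atoms, ⊤, ⅋ (par) and & (with). -/
inductive Goal (σ : Type) : Type
  | atom : σ → Goal σ
  | top : Goal σ
  | par : Goal σ → Goal σ → Goal σ
  | wth : Goal σ → Goal σ → Goal σ
  deriving DecidableEq

variable {σ : Type} [DecidableEq σ] [Fintype σ]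

/-- A fact: a finite multiset over the signature. -/
abbrev LOFact (σ : Type) := Multiset σ

/-- A context: a finite multiset of goals. -/
abbrev Ctx (σ : Type) := Multiset (Goal σ)

/-- An LO program: a finite set of clauses `H ⊸ G`, a clause being represented by
the multiset ⟨H⟩ of atoms of its head together with its body goal. -/
abbrev LOProgram (σ : Type) := Finset (Multiset σ × Goal σ)

/-- LO provability `P ⇒ Δ`. -/
inductive LOProv (P : LOProgram σ) : Ctx σ → Prop
  | topR (Δ : Ctx σ) : LOProv P (Goal.top ::ₘ Δ)
  | parR (G₁ G₂ : Goal σ) (Δ : Ctx σ) :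
      LOProv P (G₁ ::ₘ G₂ ::ₘ Δ) → LOProv P (Goal.par G₁ G₂ ::ₘ Δ)
  | wthR (G₁ G₂ : Goal σ) (Δ : Ctx σ) :
      LOProv P (G₁ ::ₘ Δ) → LOProv P (G₂ ::ₘ Δ) → LOProv P (Goal.wth G₁ G₂ ::ₘ Δ)
  | bc (H : Multiset σ) (G : Goal σ) (A : LOFact σ) :
      (H, G) ∈ P → LOProv P (G ::ₘ A.map Goal.atom) →
      LOProv P (H.map Goal.atom + A.map Goal.atom)

/-- Provability stable under adding facts is preserved by adding one goal. -/
theorem lo_weak_goal (P : LOProgram σ) (g : Goal σ) : ∀ X : Ctx σ,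
    (∀ B : LOFact σ, LOProv P (X + B.map Goal.atom)) →
    ∀ B : LOFact σ, LOProv P ((g ::ₘ X) + B.map Goal.atom) := by
  induction g with
  | atom a =>
    intro X h B
    have := h (a ::ₘ B)
    rw [Multiset.map_cons, Multiset.add_cons] at this
    rwa [Multiset.cons_add]
  | top =>
    intro X h B
    rw [Multiset.cons_add]
    exact LOProv.topR _
  | par g₁ g₂ ih₁ ih₂ =>
    intro X h B
    rw [Multiset.cons_add]
    apply LOProv.parR
    have := ih₁ _ (ih₂ X h) B
    rwa [Multiset.cons_add, Multiset.cons_add] at this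
  | wth g₁ g₂ ih₁ ih₂ =>
    intro X h B
    rw [Multiset.cons_add]
    have h₁ := ih₁ X h B
    have h₂ := ih₂ X h B
    rw [Multiset.cons_add] at h₁ h₂
    exact LOProv.wthR _ _ _ h₁ h₂

/-- Provability stable under adding facts is stable under adding contexts. -/
theorem lo_weak_ctx (P : LOProgram σ) (X : Ctx σ)
    (h : ∀ B : LOFact σ, LOProv P (X + B.map Goal.atom)) (Γ : Ctx σ) :
    ∀ B : LOFact σ, LOProv P ((X + Γ) + B.map Goal.atom) := by
  induction Γ using Multiset.induction_on with
  | empty => simpa using h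
  | cons g Γ ih =>
    rw [Multiset.add_cons]
    exact lo_weak_goal P g _ ih

/-- Admissibility of weakening in LO: provability is preserved under
multiset inclusion of contexts. -/
theorem lo_weakening (P : LOProgram σ) (Δ Δ' : Ctx σ)
    (hsub : Δ ≤ Δ') (hprov : LOProv P Δ) : LOProv P Δ' := by
  obtain ⟨Γ, rfl⟩ := Multiset.le_iff_exists_add.1 hsub
  clear hsub
  induction hprov generalizing Γ with
  | topR Δ =>
    rw [Multiset.cons_add]
    exact LOProv.topR _
  | parR G₁ G₂ Δ _ ih =>
    have := ih Γ
    rw [Multiset.cons_add, Multiset.cons_add] at this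
    rw [Multiset.cons_add]
    exact LOProv.parR _ _ _ this
  | wthR G₁ G₂ Δ _ _ ih₁ ih₂ =>
    have h₁ := ih₁ Γ
    have h₂ := ih₂ Γ
    rw [Multiset.cons_add] at h₁ h₂ ⊢
    exact LOProv.wthR _ _ _ h₁ h₂
  | bc H G A hP _ ih =>
    have key := lo_weak_ctx P (H.map Goal.atom + A.map Goal.atom) (fun B => by
      have := ih (B.map Goal.atom)
      rw [Multiset.cons_add, ← Multiset.map_add] at this
      rw [add_assoc, ← Multiset.map_add Goal.atom A B]
      exact LOProv.bc H G (A + B) hP this) Γ 0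
    simpa using key
end

section
/- Soundness and completeness of the fixpoint semantics of LO: for every LO program P, F(P) = O(P), i.e., the least fixpoint of T_P equals the set of facts A such that the sequent P ⇒ A is provable in LO. -/
variable {σ : Type} [DecidableEq σ] [Fintype σ]

/-- The satisfiability judgment `I ⊨ Δ[A]`. -/
inductive Sat (I : Set (LOFact σ)) : Ctx σ → LOFact σ → Prop
  | top (Δ : Ctx σ) (A : LOFact σ) : Sat I (Goal.top ::ₘ Δ) A
  | fact (A A' : LOFact σ) : A + A' ∈ I → Sat I (A.map Goal.atom) A'
  | par (G₁ G₂ : Goal σ) (Δ : Ctx σ) (A : LOFact σ) :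
      Sat I (G₁ ::ₘ G₂ ::ₘ Δ) A → Sat I (Goal.par G₁ G₂ ::ₘ Δ) A
  | wth (G₁ G₂ : Goal σ) (Δ : Ctx σ) (A : LOFact σ) :
      Sat I (G₁ ::ₘ Δ) A → Sat I (G₂ ::ₘ Δ) A → Sat I (Goal.wth G₁ G₂ ::ₘ Δ) A

/-- The immediate-consequence operator `T_P`. -/
def TP (P : LOProgram σ) (I : Set (LOFact σ)) : Set (LOFact σ) :=
  { M | ∃ H G A, (H, G) ∈ P ∧ Sat I ({G} : Ctx σ) A ∧ M = H + A }

/-- The operational semantics `O(P)`: the set of provable facts. -/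
def OP (P : LOProgram σ) : Set (LOFact σ) := { A : LOFact σ | LOProv P (A.map Goal.atom) }

theorem Sat.mono {I J : Set (LOFact σ)} (h : I ⊆ J) {Δ : Ctx σ} {A : LOFact σ}
    (hs : Sat I Δ A) : Sat J Δ A := by
  induction hs with
  | top Δ A => exact Sat.top Δ A
  | fact A A' hA => exact Sat.fact A A' (h hA)
  | par G₁ G₂ Δ A _ ih => exact Sat.par G₁ G₂ Δ A ih
  | wth G₁ G₂ Δ A _ _ ih₁ ih₂ => exact Sat.wth G₁ G₂ Δ A ih₁ ih₂

theorem Sat.toProv {P : LOProgram σ} {Δ : Ctx σ} {A : LOFact σ}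
    (hs : Sat (OP P) Δ A) : LOProv P (Δ + A.map Goal.atom) := by
  induction hs with
  | top Δ A => rw [Multiset.cons_add]; exact LOProv.topR _
  | fact A A' hA => rw [← Multiset.map_add]; exact hA
  | par G₁ G₂ Δ A _ ih =>
    simp only [Multiset.cons_add] at ih ⊢
    exact LOProv.parR _ _ _ ih
  | wth G₁ G₂ Δ A _ _ ih₁ ih₂ =>
    simp only [Multiset.cons_add] at ih₁ ih₂ ⊢
    exact LOProv.wthR _ _ _ ih₁ ih₂

theorem Sat.empty_inv {I : Set (LOFact σ)} {A : LOFact σ} (hs : Sat I 0 A) : A ∈ I := by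
  generalize hΔ : (0 : Ctx σ) = Δ at hs
  cases hs with
  | top Δ A => exact absurd hΔ.symm (Multiset.cons_ne_zero)
  | fact B A' hA =>
    have : B = 0 := Multiset.map_eq_zero.1 hΔ.symm
    simpa [this] using hA
  | par G₁ G₂ Δ A _ => exact absurd hΔ.symm (Multiset.cons_ne_zero)
  | wth G₁ G₂ Δ A _ _ => exact absurd hΔ.symm (Multiset.cons_ne_zero)

/-- A non-atomic goal of a split context lies in the left part. -/
theorem split_cons {G : Goal σ} (hG : ∀ a, Goal.atom a ≠ G) {Δ Δ' : Ctx σ} {A : LOFact σ}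
    (h : G ::ₘ Δ = Δ' + A.map Goal.atom) :
    ∃ Δ'', Δ' = G ::ₘ Δ'' ∧ Δ = Δ'' + A.map Goal.atom := by
  have hm : G ∈ Δ' + A.map Goal.atom := h ▸ Multiset.mem_cons_self _ _
  rcases Multiset.mem_add.1 hm with hm | hm
  · obtain ⟨Δ'', rfl⟩ := Multiset.exists_cons_of_mem hm
    refine ⟨Δ'', rfl, ?_⟩
    rw [Multiset.cons_add] at h
    exact (Multiset.cons_inj_right _).1 h
  · obtain ⟨a, _, ha⟩ := Multiset.mem_map.1 hm
    exact absurd ha (hG a)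

theorem LOProv.toSat {P : LOProgram σ} {I : Set (LOFact σ)} (hI : TP P I ⊆ I) {Δ : Ctx σ}
    (hp : LOProv P Δ) :
    ∀ (Δ' : Ctx σ) (A : LOFact σ), Δ = Δ' + A.map Goal.atom → Sat I Δ' A := by
  induction hp with
  | topR Δ =>
    intro Δ' A h
    obtain ⟨Δ'', rfl, _⟩ := split_cons (by simp) h
    exact Sat.top _ _
  | parR G₁ G₂ Δ _ ih =>
    intro Δ' A h
    obtain ⟨Δ'', rfl, rfl⟩ := split_cons (by simp) h
    exact Sat.par _ _ _ _ (ih _ _ (by simp only [Multiset.cons_add]))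
  | wthR G₁ G₂ Δ _ _ ih₁ ih₂ =>
    intro Δ' A h
    obtain ⟨Δ'', rfl, rfl⟩ := split_cons (by simp) h
    exact Sat.wth _ _ _ _ (ih₁ _ _ (by simp only [Multiset.cons_add]))
      (ih₂ _ _ (by simp only [Multiset.cons_add]))
  | bc H G A₀ hP _ ih =>
    intro Δ' A h
    have hmem : H + A₀ ∈ I :=
      hI ⟨H, G, A₀, hP, ih {G} A₀ (Multiset.singleton_add _ _).symm, rfl⟩
    have hinj : Function.Injective (Goal.atom : σ → Goal σ) := fun _ _ h => Goal.atom.inj h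
    rw [← Multiset.map_add] at h
    have hB : ∃ B : Multiset σ, B.map Goal.atom = Δ' := by
      have : ∀ g ∈ Δ', ∃ a : σ, Goal.atom a = g := by
        intro g hg
        have : g ∈ (H + A₀).map Goal.atom := h ▸ Multiset.mem_add.2 (Or.inl hg)
        obtain ⟨a, _, ha⟩ := Multiset.mem_map.1 this
        exact ⟨a, ha⟩
      clear h
      induction Δ' using Multiset.induction_on with
      | empty => exact ⟨0, rfl⟩
      | cons g Δ ih' =>
        obtain ⟨a, rfl⟩ := this g (Multiset.mem_cons_self _ _)
        obtain ⟨B, rfl⟩ := ih' fun x hx => this x (Multiset.mem_cons_of_mem hx)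
        exact ⟨a ::ₘ B, Multiset.map_cons _ _ _⟩
    obtain ⟨B, rfl⟩ := hB
    rw [← Multiset.map_add] at h
    exact Sat.fact _ _ (Multiset.map_injective hinj h ▸ hmem)

theorem OP_subset {P : LOProgram σ} {I : Set (LOFact σ)} (hI : TP P I ⊆ I) : OP P ⊆ I :=
  fun A hA => (LOProv.toSat hI hA 0 A (zero_add _).symm).empty_inv

/-- Soundness and completeness of the fixpoint semantics:
`O(P)` is the least fixpoint of `T_P`, i.e. `F(P) = O(P)`. -/
theorem fixpoint_eq_operational (P : LOProgram σ) :
    IsLeast { I : Set (LOFact σ) | TP P I = I } (OP P) := by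
  have hpre : TP P (OP P) ⊆ OP P := by
    rintro M ⟨H, G, A, hP, hs, rfl⟩
    have := hs.toProv
    rw [Multiset.singleton_add] at this
    change LOProv P ((H + A).map Goal.atom)
    rw [Multiset.map_add]
    exact LOProv.bc H G A hP this
  refine ⟨Set.Subset.antisymm hpre (OP_subset ?_), fun I hI => OP_subset (le_of_eq hI)⟩
  rintro M ⟨H, G, A, hP, hs, rfl⟩
  exact ⟨H, G, A, hP, hs.mono hpre, rfl⟩
end

section
/- There is no infinite sequence I₁, I₂, …, I_k, … of sets of finite multisets over a finite alphabet Σ such that for every k and every j < k, I_k ⋢ I_j (i.e., each term fails to be subsumed by all earlier terms). -/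
variable {σ : Type} [DecidableEq σ] [Fintype σ]

/-- Subsumption ordering on sets of facts: `I ⊑ J` iff every element of `I`
is above some element of `J` w.r.t. multiset inclusion. -/
def sqle (I J : Set (Multiset σ)) : Prop := ∀ B ∈ I, ∃ A ∈ J, A ≤ B

theorem aux_boxes {τ : Type} [DecidableEq τ] [Fintype τ] {F : Set (τ → ℕ)} (hF : F.Finite) :
    ∃ S : Set (τ → ℕ∞), S.Finite ∧
      ∀ B : τ → ℕ, (∀ A ∈ F, ¬ A ≤ B) ↔ ∃ g ∈ S, ∀ s, (B s : ℕ∞) < g s := by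
  induction F, hF using Set.Finite.induction_on with
  | empty => exact ⟨{⊤}, Set.finite_singleton _, fun B => by simp⟩
  | @insert A F _ _ ih =>
    obtain ⟨S, hS, h⟩ := ih
    refine ⟨Set.image2 (fun g s => g ⊓ Function.update ⊤ s (A s : ℕ∞)) S Set.univ,
      hS.image2 _ Set.finite_univ, fun B => ?_⟩
    constructor
    · intro hB
      obtain ⟨g, hg, hgB⟩ := (h B).1 (fun A hA => hB A (Set.mem_insert_of_mem _ hA))
      have h1 := hB A (Set.mem_insert _ _)
      rw [Pi.le_def] at h1
      push Not at h1
      obtain ⟨s, hs⟩ := h1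
      refine ⟨_, Set.mem_image2_of_mem hg (Set.mem_univ s), fun t => ?_⟩
      rw [Pi.inf_apply, lt_inf_iff]
      refine ⟨hgB t, ?_⟩
      by_cases hts : t = s
      · subst hts; simpa using hs
      · simp [hts]
    · rintro ⟨_, ⟨g, hg, s, _, rfl⟩, hB⟩ A' hA'
      rcases Set.mem_insert_iff.1 hA' with rfl | hA'
      · intro hle
        have h1 := hB s
        beta_reduce at h1
        rw [Pi.inf_apply, lt_inf_iff] at h1
        have h2 := h1.2
        simp at h2
        exact absurd (hle s) (not_le.2 h2)
      · refine (h B).2 ⟨g, hg, fun t => ?_⟩ A' hA'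
        have h1 := hB t
        beta_reduce at h1
        rw [Pi.inf_apply, lt_inf_iff] at h1
        exact h1.1

theorem aux_list {τ : Type} [DecidableEq τ] [Fintype τ] (I : Set (τ → ℕ)) :
    ∃ L : List (τ → ℕ∞),
      ∀ B : τ → ℕ, (∀ A ∈ I, ¬ A ≤ B) ↔ ∃ g ∈ L, ∀ s, (B s : ℕ∞) < g s := by
  have hfin : {x | Minimal (· ∈ I) x}.Finite :=
    WellQuasiOrderedLE.finite_of_isAntichain (setOfPred_minimal_antichain _)
  obtain ⟨S, hS, h⟩ := aux_boxes hfin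
  refine ⟨hS.toFinset.toList, fun B => ?_⟩
  simp only [Finset.mem_toList, Set.Finite.mem_toFinset]
  rw [← h B]
  constructor
  · exact fun hB A hA => hB A hA.1
  · intro hB A hA hle
    obtain ⟨m, hm, hmin⟩ := exists_minimal_le_of_wellFoundedLT (· ∈ I) A hA
    exact hB m hmin (hm.trans hle)

/-- There is no infinite sequence of sets of facts each of which fails to be
subsumed by all the earlier ones. -/
theorem no_bad_sequence :
    ¬ ∃ I : ℕ → Set (Multiset σ), ∀ k j, j < k → ¬ sqle (I k) (I j) := by
  rintro ⟨I, hI⟩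
  choose L hL using fun k => aux_list ((fun (A : Multiset σ) (s : σ) => A.count s) '' I k)
  have hw : (Set.univ : Set (σ → ℕ∞)).PartiallyWellOrderedOn (· ≤ ·) :=
    Set.isPWO_of_wellQuasiOrderedLE _
  have hl := Set.PartiallyWellOrderedOn.partiallyWellOrderedOn_sublistForall₂ (· ≤ ·) hw
  obtain ⟨j, k, hjk, hsub⟩ := hl.exists_lt (f := L) (by simp)
  apply hI k j hjk
  intro B hB
  by_contra hcon
  push Not at hcon
  obtain ⟨g, hg, hgB⟩ := (hL j (fun s => B.count s)).1 (by
    rintro _ ⟨A, hA, rfl⟩ hle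
    exact hcon A hA (Multiset.le_iff_count.2 hle))
  obtain ⟨l, hl1, hl2⟩ := List.sublistForall₂_iff.1 hsub
  obtain ⟨g', hg', hgg⟩ : ∃ g' ∈ l, g ≤ g' := by
    clear hl2 hgB hsub
    generalize L j = M at hl1 hg
    induction hl1 with
    | nil => simp at hg
    | cons h _ ih =>
      rcases List.mem_cons.1 hg with rfl | hg
      · exact ⟨_, List.mem_cons_self, h⟩
      · obtain ⟨g', h1, h2⟩ := ih hg
        exact ⟨g', List.mem_cons_of_mem _ h1, h2⟩
  exact (hL k (fun s => B.count s)).2 ⟨g', hl2.subset hg', fun s => (hgB s).trans_le (hgg s)⟩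
    _ ⟨B, hB, rfl⟩ le_rfl
end

section
/- Soundness and completeness of the symbolic satisfiability judgment: for every set of facts I, context Δ, and facts A, A': (i) if I ⊩ Δ[A], then den(I) ⊨ Δ[A'] for every fact A' with A ≼ A'; (ii) if den(I) ⊨ Δ[A'], then there exists a fact A with A ≼ A' and I ⊩ Δ[A]. -/
variable {σ : Type} [DecidableEq σ] [Fintype σ]

/-- The denotation (upward closure) of a set of facts. -/
def den (I : Set (LOFact σ)) : Set (LOFact σ) := { B : LOFact σ | ∃ A ∈ I, A ≤ B }

/-- The symbolic satisfiability judgment `I ⊩ Δ[A]`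
(`B - A` is multiset difference, `A₁ ∪ A₂` is the multiset least upper bound). -/
inductive SSat (I : Set (LOFact σ)) : Ctx σ → LOFact σ → Prop
  | top (Δ : Ctx σ) : SSat I (Goal.top ::ₘ Δ) 0
  | fact (A B : LOFact σ) : B ∈ I → SSat I (A.map Goal.atom) (B - A)
  | par (G₁ G₂ : Goal σ) (Δ : Ctx σ) (A : LOFact σ) :
      SSat I (G₁ ::ₘ G₂ ::ₘ Δ) A → SSat I (Goal.par G₁ G₂ ::ₘ Δ) A
  | wth (G₁ G₂ : Goal σ) (Δ : Ctx σ) (A₁ A₂ : LOFact σ) :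
      SSat I (G₁ ::ₘ Δ) A₁ → SSat I (G₂ ::ₘ Δ) A₂ →
      SSat I (Goal.wth G₁ G₂ ::ₘ Δ) (A₁ ∪ A₂)

/-- Soundness and completeness of the symbolic satisfiability judgment `⊩`
w.r.t. `⊨` over the denotation. -/
theorem ssat_sound_complete (I : Set (LOFact σ)) (Δ : Ctx σ) :
    (∀ A A' : LOFact σ, SSat I Δ A → A ≤ A' → Sat (den I) Δ A') ∧
    (∀ A' : LOFact σ, Sat (den I) Δ A' → ∃ A : LOFact σ, A ≤ A' ∧ SSat I Δ A) := by
  constructor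
  · intro A A' h
    induction h generalizing A' with
    | top Δ => intro _; exact Sat.top _ _
    | fact A B hB =>
      intro hle
      exact Sat.fact _ _ ⟨B, hB, by rw [add_comm]; exact Multiset.sub_le_iff_le_add.mp hle⟩
    | par G₁ G₂ Δ A _ ih => intro hle; exact Sat.par _ _ _ _ (ih _ hle)
    | wth G₁ G₂ Δ A₁ A₂ _ _ ih₁ ih₂ =>
      intro hle
      exact Sat.wth _ _ _ _ (ih₁ _ (le_trans Multiset.le_union_left hle))
        (ih₂ _ (le_trans Multiset.le_union_right hle))
  · intro A' h
    induction h with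
    | top Δ A => exact ⟨0, Multiset.zero_le _, SSat.top _⟩
    | fact A A' h =>
      obtain ⟨B, hB, hle⟩ := h
      exact ⟨B - A, Multiset.sub_le_iff_le_add.mpr (by rw [add_comm]; exact hle),
        SSat.fact _ _ hB⟩
    | par G₁ G₂ Δ A _ ih =>
      obtain ⟨B, hle, hB⟩ := ih
      exact ⟨B, hle, SSat.par _ _ _ _ hB⟩
    | wth G₁ G₂ Δ A _ _ ih₁ ih₂ =>
      obtain ⟨B₁, hle₁, hB₁⟩ := ih₁
      obtain ⟨B₂, hle₂, hB₂⟩ := ih₂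
      exact ⟨B₁ ∪ B₂, Multiset.union_le hle₁ hle₂, SSat.wth _ _ _ _ _ hB₁ hB₂⟩
end

section
/- For all sets of facts I, J, every context Δ, and every fact A: (i) if I ⊩ Δ[A] and I ⊑ J, then there exists a fact A' with A' ≼ A and J ⊩ Δ[A']; (ii) for every chain I₁ ⊑ I₂ ⊑ … of sets of facts, if den(⋃ᵢ Iᵢ) ⊨ Δ[A] then there exists k such that den(I_k) ⊨ Δ[A]. -/
variable {σ : Type} [DecidableEq σ] [Fintype σ]

theorem aux_sat_mono {I J : Set (LOFact σ)} (hIJ : I ⊆ J) {Δ : Ctx σ} {A : LOFact σ}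
    (h : Sat I Δ A) : Sat J Δ A := by
  induction h with
  | top Δ A => exact Sat.top Δ A
  | fact A A' h => exact Sat.fact A A' (hIJ h)
  | par G₁ G₂ Δ A _ ih => exact Sat.par G₁ G₂ Δ A ih
  | wth G₁ G₂ Δ A _ _ ih₁ ih₂ => exact Sat.wth G₁ G₂ Δ A ih₁ ih₂

theorem aux_ssat {I J : Set (LOFact σ)} (hIJ : sqle I J) {Δ : Ctx σ} {A : LOFact σ}
    (h : SSat I Δ A) : ∃ A' : LOFact σ, A' ≤ A ∧ SSat J Δ A' := by
  induction h with
  | top Δ => exact ⟨0, le_rfl, SSat.top Δ⟩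
  | fact A B h =>
    obtain ⟨C, hC, hCB⟩ := hIJ B h
    exact ⟨C - A, tsub_le_tsub_right hCB A, SSat.fact A C hC⟩
  | par G₁ G₂ Δ A _ ih =>
    obtain ⟨A', hA, h⟩ := ih
    exact ⟨A', hA, SSat.par G₁ G₂ Δ A' h⟩
  | wth G₁ G₂ Δ A₁ A₂ _ _ ih₁ ih₂ =>
    obtain ⟨B₁, h₁, s₁⟩ := ih₁
    obtain ⟨B₂, h₂, s₂⟩ := ih₂
    exact ⟨B₁ ∪ B₂, sup_le_sup h₁ h₂, SSat.wth G₁ G₂ Δ B₁ B₂ s₁ s₂⟩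

theorem aux_den_mono {I : ℕ → Set (LOFact σ)} (hI : ∀ i, sqle (I i) (I (i + 1))) :
    Monotone (fun i => den (I i)) := by
  apply monotone_nat_of_le_succ
  rintro n B ⟨A, hA, hAB⟩
  obtain ⟨C, hC, hCA⟩ := hI n A hA
  exact ⟨C, hC, hCA.trans hAB⟩

theorem aux_sat {I : ℕ → Set (LOFact σ)} (hI : ∀ i, sqle (I i) (I (i + 1)))
    {Δ : Ctx σ} {A : LOFact σ}
    (h : Sat (den (⋃ i, I i)) Δ A) : ∃ k, Sat (den (I k)) Δ A := by
  induction h with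
  | top Δ A => exact ⟨0, Sat.top Δ A⟩
  | fact A A' h =>
    obtain ⟨B, hB, hBA⟩ := h
    obtain ⟨k, hk⟩ := Set.mem_iUnion.1 hB
    exact ⟨k, Sat.fact A A' ⟨B, hk, hBA⟩⟩
  | par G₁ G₂ Δ A _ ih =>
    obtain ⟨k, h⟩ := ih
    exact ⟨k, Sat.par G₁ G₂ Δ A h⟩
  | wth G₁ G₂ Δ A _ _ ih₁ ih₂ =>
    obtain ⟨k, hk⟩ := ih₁
    obtain ⟨l, hl⟩ := ih₂
    exact ⟨max k l, Sat.wth G₁ G₂ Δ A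
      (aux_sat_mono (aux_den_mono hI (le_max_left k l)) hk)
      (aux_sat_mono (aux_den_mono hI (le_max_right k l)) hl)⟩

/-- (i) `⊩` is monotone (up to `≼`) w.r.t. the subsumption ordering `⊑`;
(ii) `⊨` over denotations is finitary on `⊑`-chains. -/
theorem ssat_sqle_properties :
    (∀ (I J : Set (LOFact σ)) (Δ : Ctx σ) (A : LOFact σ),
        SSat I Δ A → sqle I J → ∃ A' : LOFact σ, A' ≤ A ∧ SSat J Δ A') ∧
    (∀ (I : ℕ → Set (LOFact σ)), (∀ i, sqle (I i) (I (i + 1))) →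
        ∀ (Δ : Ctx σ) (A : LOFact σ),
          Sat (den (⋃ i, I i)) Δ A → ∃ k, Sat (den (I k)) Δ A) := by
  exact ⟨fun _ _ _ _ h hIJ => aux_ssat hIJ h, fun _ hI _ _ h => aux_sat hI h⟩
end

section
/- For every LO program P and every set of facts I, den(S_P(I)) = T_P(den(I)): the denotation of the symbolic fixpoint operator applied to I equals the ground immediate-consequence operator applied to the denotation of I. -/
variable {σ : Type} [DecidableEq σ] [Fintype σ]

/-- The symbolic fixpoint operator `S_P`. -/
def SP (P : LOProgram σ) (I : Set (LOFact σ)) : Set (LOFact σ) :=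
  { M | ∃ H G A, (H, G) ∈ P ∧ SSat I ({G} : Ctx σ) A ∧ M = H + A }

theorem SSat.sound {I : Set (LOFact σ)} {Δ : Ctx σ} {A : LOFact σ} (h : SSat I Δ A) :
    ∀ B, A ≤ B → Sat (den I) Δ B := by
  induction h with
  | top Δ => intro B _; exact Sat.top Δ B
  | fact A C hC =>
    intro B hB
    exact Sat.fact A B ⟨C, hC, by rw [add_comm]; exact tsub_le_iff_right.mp hB⟩
  | par G₁ G₂ Δ A _ ih => intro B hB; exact Sat.par _ _ _ _ (ih B hB)
  | wth G₁ G₂ Δ A₁ A₂ _ _ ih₁ ih₂ =>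
    intro B hB
    exact Sat.wth _ _ _ _ (ih₁ B (Multiset.le_union_left.trans hB))
      (ih₂ B (Multiset.le_union_right.trans hB))

theorem Sat.complete {I : Set (LOFact σ)} {Δ : Ctx σ} {B : LOFact σ} (h : Sat (den I) Δ B) :
    ∃ A, SSat I Δ A ∧ A ≤ B := by
  induction h with
  | top Δ A => exact ⟨0, SSat.top Δ, Multiset.zero_le _⟩
  | fact A A' hA =>
    obtain ⟨C, hC, hle⟩ := hA
    exact ⟨C - A, SSat.fact A C hC, tsub_le_iff_left.mpr hle⟩
  | par G₁ G₂ Δ A _ ih =>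
    obtain ⟨C, hC, hle⟩ := ih
    exact ⟨C, SSat.par _ _ _ _ hC, hle⟩
  | wth G₁ G₂ Δ A _ _ ih₁ ih₂ =>
    obtain ⟨C₁, hC₁, hle₁⟩ := ih₁
    obtain ⟨C₂, hC₂, hle₂⟩ := ih₂
    exact ⟨C₁ ∪ C₂, SSat.wth _ _ _ _ _ hC₁ hC₂, Multiset.union_le hle₁ hle₂⟩

/-- `S_P` is sound and complete w.r.t. `T_P`:
the denotation of `S_P(I)` equals `T_P` applied to the denotation of `I`. -/
theorem den_SP_eq_TP_den (P : LOProgram σ) (I : Set (LOFact σ)) :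
    den (SP P I) = TP P (den I) := by
  ext M
  constructor
  · rintro ⟨_, ⟨H, G, A, hP, hA, rfl⟩, hle⟩
    obtain ⟨D, rfl⟩ := Multiset.le_iff_exists_add.mp hle
    exact ⟨H, G, A + D, hP, hA.sound _ (Multiset.le_add_right A D), add_assoc _ _ _⟩
  · rintro ⟨H, G, B, hP, hB, rfl⟩
    obtain ⟨A, hA, hle⟩ := hB.complete
    exact ⟨H + A, ⟨H, G, A, hP, hA, rfl⟩, by gcongr⟩
end

section
/- For every LO program P and all sets of facts I, J: if I ≃ J (i.e., den(I) = den(J)) then S_P(I) ≃ S_P(J); hence S_P is well defined on equivalence classes of interpretations modulo ≃. -/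
variable {σ : Type} [DecidableEq σ] [Fintype σ]

/-- The symbolic judgment is monotone up to shrinking the output fact. -/
theorem SSat.mono_den {I J : Set (LOFact σ)} (h : den I ⊆ den J) {Δ : Ctx σ} {A : LOFact σ}
    (hs : SSat I Δ A) : ∃ A', SSat J Δ A' ∧ A' ≤ A := by
  induction hs with
  | top Δ => exact ⟨0, SSat.top Δ, le_rfl⟩
  | fact A B hB =>
    obtain ⟨C, hC, hle⟩ := h (show B ∈ den I from ⟨B, hB, le_rfl⟩)
    exact ⟨C - A, SSat.fact A C hC, tsub_le_tsub_right hle A⟩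
  | par G₁ G₂ Δ A _ ih =>
    obtain ⟨A', h1, h2⟩ := ih
    exact ⟨A', SSat.par _ _ _ _ h1, h2⟩
  | wth G₁ G₂ Δ A₁ A₂ _ _ ih1 ih2 =>
    obtain ⟨B₁, h1, l1⟩ := ih1
    obtain ⟨B₂, h2, l2⟩ := ih2
    exact ⟨B₁ ∪ B₂, SSat.wth _ _ _ _ _ h1 h2, sup_le_sup l1 l2⟩

theorem SP_den_mono (P : LOProgram σ) {I J : Set (LOFact σ)} (h : den I ⊆ den J) :
    den (SP P I) ⊆ den (SP P J) := by
  rintro B ⟨M, ⟨H, G, A, hP, hs, rfl⟩, hle⟩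
  obtain ⟨A', hs', hle'⟩ := hs.mono_den h
  exact ⟨H + A', ⟨H, G, A', hP, hs', rfl⟩, (add_le_add_right hle' H).trans hle⟩

/-- `S_P` is well defined modulo the equivalence `I ≃ J ↔ den(I) = den(J)`. -/
theorem SP_well_defined (P : LOProgram σ) (I J : Set (LOFact σ))
    (h : den I = den J) : den (SP P I) = den (SP P J) := by
  exact Set.Subset.antisymm (SP_den_mono P h.subset) (SP_den_mono P h.symm.subset)
end

section
/- For every LO program P, the symbolic operator S_P is monotone with respect to ⊑ (if I ⊑ J then S_P(I) ⊑ S_P(J)) and finitary with respect to ⊑ (for every chain I₁ ⊑ I₂ ⊑ … of sets of facts, S_P(⋃ᵢ Iᵢ) ⊑ ⋃ᵢ S_P(Iᵢ)). -/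
variable {σ : Type} [DecidableEq σ] [Fintype σ]

theorem SSat_mono {I J : Set (LOFact σ)} (h : sqle I J) {Δ : Ctx σ} {A : LOFact σ}
    (hs : SSat I Δ A) : ∃ A', SSat J Δ A' ∧ A' ≤ A := by
  induction hs with
  | top Δ => exact ⟨0, SSat.top Δ, le_rfl⟩
  | fact A B hB =>
    obtain ⟨C, hC, hle⟩ := h B hB
    exact ⟨C - A, SSat.fact A C hC, tsub_le_tsub_right hle A⟩
  | par G₁ G₂ Δ A _ ih =>
    obtain ⟨A', h1, h2⟩ := ih
    exact ⟨A', SSat.par _ _ _ _ h1, h2⟩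
  | wth G₁ G₂ Δ A₁ A₂ _ _ ih1 ih2 =>
    obtain ⟨B₁, h1, h1'⟩ := ih1
    obtain ⟨B₂, h2, h2'⟩ := ih2
    exact ⟨B₁ ∪ B₂, SSat.wth _ _ _ _ _ h1 h2, sup_le_sup h1' h2'⟩

theorem sqle_chain {I : ℕ → Set (LOFact σ)} (h : ∀ i, sqle (I i) (I (i + 1)))
    {i j : ℕ} (hij : i ≤ j) : sqle (I i) (I j) := by
  induction hij with
  | refl => exact fun B hB => ⟨B, hB, le_rfl⟩
  | step _ ih =>
    intro B hB
    obtain ⟨C, hC, hCB⟩ := ih B hB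
    obtain ⟨D, hD, hDC⟩ := h _ C hC
    exact ⟨D, hD, hDC.trans hCB⟩

theorem SSat_fin {I : ℕ → Set (LOFact σ)} (h : ∀ i, sqle (I i) (I (i + 1)))
    {Δ : Ctx σ} {A : LOFact σ}
    (hs : SSat (⋃ i, I i) Δ A) : ∃ i A', SSat (I i) Δ A' ∧ A' ≤ A := by
  induction hs with
  | top Δ => exact ⟨0, 0, SSat.top Δ, le_rfl⟩
  | fact A B hB =>
    obtain ⟨i, hi⟩ := Set.mem_iUnion.1 hB
    exact ⟨i, B - A, SSat.fact A B hi, le_rfl⟩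
  | par G₁ G₂ Δ A _ ih =>
    obtain ⟨i, A', h1, h2⟩ := ih
    exact ⟨i, A', SSat.par _ _ _ _ h1, h2⟩
  | wth G₁ G₂ Δ A₁ A₂ _ _ ih1 ih2 =>
    obtain ⟨i, B₁, h1, h1'⟩ := ih1
    obtain ⟨j, B₂, h2, h2'⟩ := ih2
    obtain ⟨C₁, k1, k1'⟩ := SSat_mono (sqle_chain h (le_max_left i j)) h1
    obtain ⟨C₂, k2, k2'⟩ := SSat_mono (sqle_chain h (le_max_right i j)) h2
    exact ⟨max i j, C₁ ∪ C₂, SSat.wth _ _ _ _ _ k1 k2,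
      sup_le_sup (k1'.trans h1') (k2'.trans h2')⟩

/-- `S_P` is monotone and finitary w.r.t. the subsumption ordering `⊑`. -/
theorem SP_monotone_finitary (P : LOProgram σ) :
    (∀ I J : Set (LOFact σ), sqle I J → sqle (SP P I) (SP P J)) ∧
    (∀ I : ℕ → Set (LOFact σ), (∀ i, sqle (I i) (I (i + 1))) →
        sqle (SP P (⋃ i, I i)) (⋃ i, SP P (I i))) := by
  refine ⟨?_, ?_⟩
  · rintro I J h _ ⟨H, G, A, hP, hs, rfl⟩
    obtain ⟨A', h1, h2⟩ := SSat_mono h hs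
    exact ⟨H + A', ⟨H, G, A', hP, h1, rfl⟩, add_le_add_right h2 H⟩
  · rintro I h _ ⟨H, G, A, hP, hs, rfl⟩
    obtain ⟨i, A', h1, h2⟩ := SSat_fin h hs
    exact ⟨H + A', Set.mem_iUnion.2 ⟨i, H, G, A', hP, h1, rfl⟩, add_le_add_right h2 H⟩
end

section
/- Termination and correctness of the symbolic fixpoint computation: for every LO program P, there exists k ∈ ℕ such that ⋃_{i=0}^{k} S_P^i(∅) ≃ ⋃_{i≥0} S_P^i(∅) (the symbolic fixpoint is reached after finitely many steps), and O(P) = den(⋃_{i≥0} S_P^i(∅)), i.e., the denotation of the symbolic fixpoint equals the set of facts provable from P in LO. -/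
variable {σ : Type} [DecidableEq σ] [Fintype σ]

theorem loprov_weaken {P : LOProgram σ} {Δ : Ctx σ} (h : LOProv P Δ) (C : LOFact σ) :
    LOProv P (Δ + C.map Goal.atom) := by
  induction h with
  | topR Δ => rw [Multiset.cons_add]; exact LOProv.topR _
  | parR G₁ G₂ Δ _ ih =>
    rw [Multiset.cons_add] at *
    rw [Multiset.cons_add] at ih
    exact LOProv.parR _ _ _ ih
  | wthR G₁ G₂ Δ _ _ ih1 ih2 =>
    rw [Multiset.cons_add] at *
    exact LOProv.wthR _ _ _ ih1 ih2
  | bc H G A hm _ ih =>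
    rw [Multiset.cons_add, ← Multiset.map_add] at ih
    rw [add_assoc, ← Multiset.map_add]
    exact LOProv.bc _ _ _ hm ih

theorem ssat_sound {P : LOProgram σ} {I : Set (LOFact σ)}
    (hI : ∀ B ∈ I, LOProv P (B.map Goal.atom)) {Δ : Ctx σ} {A : LOFact σ}
    (h : SSat I Δ A) : ∀ A' : LOFact σ, A ≤ A' → LOProv P (Δ + A'.map Goal.atom) := by
  induction h with
  | top Δ => intro A' _; rw [Multiset.cons_add]; exact LOProv.topR _
  | fact A B hB =>
    intro A' hA'
    have h1 : B ≤ A + A' := by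
      rw [add_comm]; exact tsub_le_iff_right.mp hA'
    obtain ⟨C, hC⟩ := Multiset.le_iff_exists_add.mp h1
    rw [← Multiset.map_add, hC, Multiset.map_add]
    exact loprov_weaken (hI B hB) C
  | par G₁ G₂ Δ A _ ih =>
    intro A' hA'
    have := ih A' hA'
    rw [Multiset.cons_add, Multiset.cons_add] at this
    rw [Multiset.cons_add]
    exact LOProv.parR _ _ _ this
  | wth G₁ G₂ Δ A₁ A₂ _ _ ih1 ih2 =>
    intro A' hA'
    have h1 := ih1 A' (le_trans Multiset.le_union_left hA')
    have h2 := ih2 A' (le_trans Multiset.le_union_right hA')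
    rw [Multiset.cons_add] at *
    exact LOProv.wthR _ _ _ h1 h2

theorem ssat_mono {I J : Set (LOFact σ)} (hIJ : I ⊆ J) {Δ : Ctx σ} {A : LOFact σ}
    (h : SSat I Δ A) : SSat J Δ A := by
  induction h with
  | top Δ => exact SSat.top _
  | fact A B hB => exact SSat.fact _ _ (hIJ hB)
  | par G₁ G₂ Δ A _ ih => exact SSat.par _ _ _ _ ih
  | wth G₁ G₂ Δ A₁ A₂ _ _ ih1 ih2 => exact SSat.wth _ _ _ _ _ ih1 ih2

theorem sp_mono (P : LOProgram σ) : Monotone (SP P) := by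
  rintro I J hIJ M ⟨H, G, A, hm, hs, rfl⟩
  exact ⟨H, G, A, hm, ssat_mono hIJ hs, rfl⟩

theorem iter_mono (P : LOProgram σ) : Monotone (fun i : ℕ => (SP P)^[i] (∅ : Set (LOFact σ))) :=
  (sp_mono P).monotone_iterate_of_le_map (Set.empty_subset _)

theorem ssat_cont {I : ℕ → Set (LOFact σ)} (hI : Monotone I) {Δ : Ctx σ} {A : LOFact σ}
    (h : SSat (⋃ i, I i) Δ A) : ∃ k, SSat (I k) Δ A := by
  induction h with
  | top Δ => exact ⟨0, SSat.top _⟩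
  | fact A B hB =>
    obtain ⟨k, hk⟩ := Set.mem_iUnion.mp hB
    exact ⟨k, SSat.fact _ _ hk⟩
  | par G₁ G₂ Δ A _ ih =>
    obtain ⟨k, hk⟩ := ih
    exact ⟨k, SSat.par _ _ _ _ hk⟩
  | wth G₁ G₂ Δ A₁ A₂ _ _ ih1 ih2 =>
    obtain ⟨k, hk⟩ := ih1
    obtain ⟨l, hl⟩ := ih2
    exact ⟨max k l, SSat.wth _ _ _ _ _ (ssat_mono (hI (le_max_left k l)) hk)
      (ssat_mono (hI (le_max_right k l)) hl)⟩

theorem sp_lfp_subset (P : LOProgram σ) :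
    SP P (⋃ i, (SP P)^[i] ∅) ⊆ ⋃ i, (SP P)^[i] ∅ := by
  rintro M ⟨H, G, A, hm, hs, rfl⟩
  obtain ⟨k, hk⟩ := ssat_cont (iter_mono P) hs
  refine Set.mem_iUnion.mpr ⟨k + 1, ?_⟩
  rw [Function.iterate_succ_apply']
  exact ⟨H, G, A, hm, hk, rfl⟩

theorem cons_split {g : Goal σ} {Δ Δ' : Ctx σ} {C : LOFact σ}
    (hg : ∀ a, g ≠ Goal.atom a) (h : g ::ₘ Δ = Δ' + C.map Goal.atom) :
    ∃ Δ'', Δ' = g ::ₘ Δ'' ∧ Δ = Δ'' + C.map Goal.atom := by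
  have h1 : g ∈ Δ' + C.map Goal.atom := h ▸ Multiset.mem_cons_self g Δ
  rcases Multiset.mem_add.mp h1 with h2 | h2
  · obtain ⟨Δ'', rfl⟩ := Multiset.exists_cons_of_mem h2
    rw [Multiset.cons_add] at h
    exact ⟨Δ'', rfl, (Multiset.cons_inj_right g).mp h⟩
  · obtain ⟨a, _, ha⟩ := Multiset.mem_map.mp h2
    exact absurd ha.symm (hg a)

theorem atom_inj : Function.Injective (Goal.atom : σ → Goal σ) := fun _ _ h => by
  injection h

theorem ssat_split {I : Set (LOFact σ)} {Δ : Ctx σ} {D : LOFact σ} (h : SSat I Δ D) :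
    ∀ (Δ' : Ctx σ) (C : LOFact σ), Δ = Δ' + C.map Goal.atom →
      ∃ D', SSat I Δ' D' ∧ D' ≤ D + C := by
  induction h with
  | top Δ =>
    intro Δ' C h
    obtain ⟨Δ'', rfl, rfl⟩ := cons_split (by simp) h
    exact ⟨0, SSat.top _, Multiset.zero_le _⟩
  | fact A B hB =>
    intro Δ' C h
    have hC : C ≤ A := by
      rw [← Multiset.map_le_map_iff atom_inj, h]
      exact Multiset.le_add_left _ _
    obtain ⟨E, rfl⟩ := Multiset.le_iff_exists_add.mp hC
    rw [Multiset.map_add, add_comm] at h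
    obtain rfl := add_right_cancel h
    refine ⟨B - E, SSat.fact _ _ hB, ?_⟩
    rw [Multiset.le_iff_count]
    intro a
    simp only [Multiset.count_sub, Multiset.count_add]
    omega
  | par G₁ G₂ Δ A _ ih =>
    intro Δ' C h
    obtain ⟨Δ'', rfl, rfl⟩ := cons_split (by simp) h
    obtain ⟨D', h1, h2⟩ := ih (G₁ ::ₘ G₂ ::ₘ Δ'') C (by simp)
    exact ⟨D', SSat.par _ _ _ _ h1, h2⟩
  | wth G₁ G₂ Δ A₁ A₂ _ _ ih1 ih2 =>
    intro Δ' C h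
    obtain ⟨Δ'', rfl, rfl⟩ := cons_split (by simp) h
    obtain ⟨D1, h1, h1'⟩ := ih1 (G₁ ::ₘ Δ'') C (by simp)
    obtain ⟨D2, h2, h2'⟩ := ih2 (G₂ ::ₘ Δ'') C (by simp)
    refine ⟨D1 ∪ D2, SSat.wth _ _ _ _ _ h1 h2, Multiset.union_le ?_ ?_⟩
    · exact h1'.trans (add_le_add_left Multiset.le_union_left _)
    · exact h2'.trans (add_le_add_left Multiset.le_union_right _)

theorem loprov_complete {P : LOProgram σ} {Δ : Ctx σ} (h : LOProv P Δ) :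
    SSat (⋃ i, (SP P)^[i] ∅) Δ 0 := by
  induction h with
  | topR Δ => exact SSat.top _
  | parR G₁ G₂ Δ _ ih => exact SSat.par _ _ _ _ ih
  | wthR G₁ G₂ Δ _ _ ih1 ih2 =>
    have := SSat.wth _ _ _ _ _ ih1 ih2
    simpa using this
  | bc H G A hm _ ih =>
    obtain ⟨A', h1, h2⟩ := ssat_split ih {G} A (by simp)
    rw [zero_add] at h2
    have h3 : H + A' ∈ ⋃ i, (SP P)^[i] (∅ : Set (LOFact σ)) :=
      sp_lfp_subset P ⟨H, G, A', hm, h1, rfl⟩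
    have h4 := SSat.fact (H + A) (H + A') h3
    rw [tsub_eq_zero_of_le (show H + A' ≤ H + A from Multiset.add_le_add_iff_left.mpr h2),
      Multiset.map_add] at h4
    exact h4

theorem ssat_fact_inv {I : Set (LOFact σ)} {Δ : Ctx σ} {D : LOFact σ} (h : SSat I Δ D)
    (A : LOFact σ) (hΔ : Δ = A.map Goal.atom) : ∃ B ∈ I, D = B - A := by
  cases h with
  | top Δ =>
    obtain ⟨Δ'', h, _⟩ := cons_split (Δ' := 0) (C := A) (by simp) (hΔ.trans (zero_add _).symm)
    exact absurd h.symm (Multiset.cons_ne_zero)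
  | fact A' B hB =>
    obtain rfl := Multiset.map_injective atom_inj hΔ
    exact ⟨B, hB, rfl⟩
  | par G₁ G₂ Δ A _ =>
    obtain ⟨Δ'', h, _⟩ := cons_split (Δ' := 0) (by simp) (hΔ.trans (zero_add _).symm)
    exact absurd h.symm (Multiset.cons_ne_zero)
  | wth G₁ G₂ Δ A₁ A₂ _ _ =>
    obtain ⟨Δ'', h, _⟩ := cons_split (Δ' := 0) (by simp) (hΔ.trans (zero_add _).symm)
    exact absurd h.symm (Multiset.cons_ne_zero)

theorem antichain_finite (S : Set (Multiset σ)) (hS : IsAntichain (· ≤ ·) S) : S.Finite := by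
  have hinj : Function.Injective (fun (m : Multiset σ) (a : σ) => m.count a) := by
    intro m n h
    exact Multiset.ext.mpr (fun a => congrFun h a)
  refine Set.Finite.of_finite_image (f := fun (m : Multiset σ) (a : σ) => m.count a) ?_
    hinj.injOn
  refine WellQuasiOrderedLE.finite_of_isAntichain ?_
  · rintro _ ⟨m, hm, rfl⟩ _ ⟨n, hn, rfl⟩ hne hle
    refine hS hm hn (fun h => hne (by rw [h])) ?_
    exact Multiset.le_iff_count.mpr (fun a => hle a)

/-- Termination and correctness of the symbolic fixpoint computation:
the iteration of `S_P` converges (modulo `≃`, i.e. modulo `den`) after finitely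
many steps, and the denotation of the symbolic fixpoint is exactly `O(P)`. -/
theorem symbolic_fixpoint_terminates_and_correct (P : LOProgram σ) :
    (∃ k : ℕ, den (⋃ i ≤ k, (SP P)^[i] ∅) = den (⋃ i, (SP P)^[i] ∅)) ∧
    OP P = den (⋃ i, (SP P)^[i] ∅) := by
  constructor
  · set U : Set (LOFact σ) := ⋃ i, (SP P)^[i] ∅ with hU
    have hfin : {x | Minimal (· ∈ U) x}.Finite :=
      antichain_finite _ (setOfPred_minimal_antichain _)
    have hk : ∀ x ∈ {x | Minimal (· ∈ U) x}, ∃ k, x ∈ (SP P)^[k] (∅ : Set (LOFact σ)) :=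
      fun x hx => Set.mem_iUnion.mp hx.1
    choose! f hf using hk
    obtain ⟨k, hk⟩ := (hfin.image f).bddAbove
    refine ⟨k, Set.Subset.antisymm ?_ ?_⟩
    · rintro B ⟨A, hA, hAB⟩
      obtain ⟨i, _, hi⟩ := Set.mem_iUnion₂.mp hA
      exact ⟨A, Set.mem_iUnion.mpr ⟨i, hi⟩, hAB⟩
    · rintro B ⟨A, hA, hAB⟩
      obtain ⟨M, hM, hMin⟩ := exists_minimal_le_of_wellFoundedLT (· ∈ U) A hA
      exact ⟨M, Set.mem_iUnion₂.mpr ⟨f M, hk ⟨M, hMin, rfl⟩, hf M hMin⟩, hM.trans hAB⟩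
  · apply Set.Subset.antisymm
    · intro A hA
      obtain ⟨B, hB, h0⟩ := ssat_fact_inv (loprov_complete hA) A rfl
      exact ⟨B, hB, tsub_eq_zero_iff_le.mp h0.symm⟩
    · rintro B ⟨A, hA, hAB⟩
      have key : ∀ i, ∀ A ∈ (SP P)^[i] (∅ : Set (LOFact σ)), LOProv P (A.map Goal.atom) := by
        intro i
        induction i with
        | zero => intro A hA; exact absurd hA (Set.notMem_empty A)
        | succ i ih =>
          intro A hA
          rw [Function.iterate_succ_apply'] at hA
          obtain ⟨H, G, A, hm, hs, rfl⟩ := hA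
          have := ssat_sound ih hs A le_rfl
          rw [Multiset.singleton_add] at this
          rw [Multiset.map_add]
          exact LOProv.bc _ _ _ hm this
      obtain ⟨i, hi⟩ := Set.mem_iUnion.mp hA
      obtain ⟨C, rfl⟩ := Multiset.le_iff_exists_add.mp hAB
      show LOProv P _
      rw [Multiset.map_add]
      exact loprov_weaken (key i A hi) C
end

section
/- Soundness and completeness of the fixpoint semantics of LO₁: for every LO₁ program P, F₁(P) = O₁(P), i.e., the least fixpoint of T¹_P equals the set of facts A such that the sequent P ⇒₁ A is provable in LO₁. -/
/-- LO₁ goals: atoms, ⊤, the constant 1, ⅋ (par) and & (with). -/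
inductive Goal1 (σ : Type) : Type
  | atom : σ → Goal1 σ
  | top : Goal1 σ
  | one : Goal1 σ
  | par : Goal1 σ → Goal1 σ → Goal1 σ
  | wth : Goal1 σ → Goal1 σ → Goal1 σ
  deriving DecidableEq

variable {σ : Type} [DecidableEq σ] [Fintype σ]

/-- A context: a finite multiset of LO₁ goals. -/
abbrev Ctx1 (σ : Type) := Multiset (Goal1 σ)

/-- An LO₁ program: a finite set of clauses `H ⊸ G`. -/
abbrev LO1Program (σ : Type) := Finset (Multiset σ × Goal1 σ)

/-- LO₁ provability `P ⇒₁ Δ`. -/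
inductive LO1Prov (P : LO1Program σ) : Ctx1 σ → Prop
  | oneR : LO1Prov P ({Goal1.one} : Ctx1 σ)
  | topR (Δ : Ctx1 σ) : LO1Prov P (Goal1.top ::ₘ Δ)
  | parR (G₁ G₂ : Goal1 σ) (Δ : Ctx1 σ) :
      LO1Prov P (G₁ ::ₘ G₂ ::ₘ Δ) → LO1Prov P (Goal1.par G₁ G₂ ::ₘ Δ)
  | wthR (G₁ G₂ : Goal1 σ) (Δ : Ctx1 σ) :
      LO1Prov P (G₁ ::ₘ Δ) → LO1Prov P (G₂ ::ₘ Δ) → LO1Prov P (Goal1.wth G₁ G₂ ::ₘ Δ)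
  | bc (H : Multiset σ) (G : Goal1 σ) (A : LOFact σ) :
      (H, G) ∈ P → LO1Prov P (G ::ₘ A.map Goal1.atom) →
      LO1Prov P (H.map Goal1.atom + A.map Goal1.atom)

/-- The LO₁ satisfiability judgment `I ⊨₁ Δ[A]`. -/
inductive Sat1 (I : Set (LOFact σ)) : Ctx1 σ → LOFact σ → Prop
  | one : Sat1 I ({Goal1.one} : Ctx1 σ) 0
  | top (Δ : Ctx1 σ) (A : LOFact σ) : Sat1 I (Goal1.top ::ₘ Δ) A
  | fact (A A' : LOFact σ) : A + A' ∈ I → Sat1 I (A.map Goal1.atom) A'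
  | par (G₁ G₂ : Goal1 σ) (Δ : Ctx1 σ) (A : LOFact σ) :
      Sat1 I (G₁ ::ₘ G₂ ::ₘ Δ) A → Sat1 I (Goal1.par G₁ G₂ ::ₘ Δ) A
  | wth (G₁ G₂ : Goal1 σ) (Δ : Ctx1 σ) (A : LOFact σ) :
      Sat1 I (G₁ ::ₘ Δ) A → Sat1 I (G₂ ::ₘ Δ) A → Sat1 I (Goal1.wth G₁ G₂ ::ₘ Δ) A

/-- The LO₁ immediate-consequence operator `T¹_P`. -/
def TP1 (P : LO1Program σ) (I : Set (LOFact σ)) : Set (LOFact σ) :=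
  { M | ∃ H G A, (H, G) ∈ P ∧ Sat1 I ({G} : Ctx1 σ) A ∧ M = H + A }

/-- The operational semantics `O₁(P)`: the set of LO₁-provable facts. -/
def OP1 (P : LO1Program σ) : Set (LOFact σ) := { A : LOFact σ | LO1Prov P (A.map Goal1.atom) }

theorem sat1_sound (P : LO1Program σ) {Δ : Ctx1 σ} {A : LOFact σ}
    (h : Sat1 (OP1 P) Δ A) : LO1Prov P (Δ + A.map Goal1.atom) := by
  induction h with
  | one => simpa using LO1Prov.oneR
  | top Δ A => rw [Multiset.cons_add]; exact LO1Prov.topR _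
  | fact A A' h => rw [← Multiset.map_add]; exact h
  | par G₁ G₂ Δ A _ ih =>
    rw [Multiset.cons_add]
    apply LO1Prov.parR
    simpa only [Multiset.cons_add] using ih
  | wth G₁ G₂ Δ A _ _ ih₁ ih₂ =>
    rw [Multiset.cons_add]
    apply LO1Prov.wthR
    · simpa only [Multiset.cons_add] using ih₁
    · simpa only [Multiset.cons_add] using ih₂

theorem ctx_split {X : Goal1 σ} (hX : ∀ a, X ≠ Goal1.atom a) {Γ Δ : Ctx1 σ} {A : LOFact σ}
    (h : X ::ₘ Γ = Δ + A.map Goal1.atom) :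
    ∃ Δ', Δ = X ::ₘ Δ' ∧ Γ = Δ' + A.map Goal1.atom := by
  have hm : X ∈ Δ + A.map Goal1.atom := h ▸ Multiset.mem_cons_self _ _
  have hm' : X ∈ Δ := by
    rcases Multiset.mem_add.1 hm with h1 | h1
    · exact h1
    · obtain ⟨a, _, ha⟩ := Multiset.mem_map.1 h1
      exact absurd ha.symm (hX a)
  obtain ⟨Δ', rfl⟩ := Multiset.exists_cons_of_mem hm'
  refine ⟨Δ', rfl, ?_⟩
  rw [Multiset.cons_add] at h
  exact (Multiset.cons_inj_right _).1 h

theorem atom_inj_s16 : Function.Injective (Goal1.atom : σ → Goal1 σ) := by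
  intro a b h
  exact Goal1.atom.inj h

theorem sat1_complete (P : LO1Program σ) {I : Set (LOFact σ)} (hI : TP1 P I ⊆ I)
    {Γ : Ctx1 σ} (h : LO1Prov P Γ) :
    ∀ (Δ : Ctx1 σ) (A : LOFact σ), Γ = Δ + A.map Goal1.atom → Sat1 I Δ A := by
  induction h with
  | oneR =>
    intro Δ A e
    obtain ⟨Δ', rfl, e'⟩ := ctx_split (X := Goal1.one) (Γ := 0) (by simp) e
    have h0 := e'.symm
    rw [add_eq_zero] at h0
    obtain ⟨rfl, h0⟩ := h0
    rw [Multiset.map_eq_zero] at h0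
    subst h0
    exact Sat1.one
  | topR Γ =>
    intro Δ A e
    obtain ⟨Δ', rfl, e'⟩ := ctx_split (by simp) e
    exact Sat1.top _ _
  | parR G₁ G₂ Γ _ ih =>
    intro Δ A e
    obtain ⟨Δ', rfl, rfl⟩ := ctx_split (by simp) e
    exact Sat1.par _ _ _ _ (ih _ _ (by simp only [Multiset.cons_add]))
  | wthR G₁ G₂ Γ _ _ ih₁ ih₂ =>
    intro Δ A e
    obtain ⟨Δ', rfl, rfl⟩ := ctx_split (by simp) e
    exact Sat1.wth _ _ _ _ (ih₁ _ _ (by simp only [Multiset.cons_add]))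
      (ih₂ _ _ (by simp only [Multiset.cons_add]))
  | bc H G A' hP _ ih =>
    intro Δ A e
    have hΔ : ∀ x ∈ Δ, ∃ a, Goal1.atom a = x := by
      intro x hx
      have : x ∈ (H + A').map Goal1.atom := by
        rw [Multiset.map_add, e]
        exact Multiset.mem_add.2 (Or.inl hx)
      obtain ⟨a, _, ha⟩ := Multiset.mem_map.1 this
      exact ⟨a, ha⟩
    obtain ⟨B, rfl⟩ : ∃ B : Multiset σ, B.map Goal1.atom = Δ := by
      clear e
      induction Δ using Multiset.induction with
      | empty => exact ⟨0, rfl⟩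
      | cons x Δ ihΔ =>
        obtain ⟨B, rfl⟩ := ihΔ (fun y hy => hΔ y (Multiset.mem_cons_of_mem hy))
        obtain ⟨a, rfl⟩ := hΔ x (Multiset.mem_cons_self _ _)
        exact ⟨a ::ₘ B, Multiset.map_cons _ _ _⟩
    rw [← Multiset.map_add, ← Multiset.map_add] at e
    have e' := Multiset.map_injective atom_inj_s16 e
    apply Sat1.fact
    rw [← e']
    exact hI ⟨H, G, A', hP, ih _ _ (by rw [Multiset.singleton_add]), rfl⟩

theorem op1_subset (P : LO1Program σ) {I : Set (LOFact σ)} (hI : TP1 P I ⊆ I) :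
    OP1 P ⊆ TP1 P I := by
  intro A hA
  have hA' : LO1Prov P (A.map Goal1.atom) := hA
  generalize e : A.map Goal1.atom = Γ at hA'
  have key : ∀ X : Goal1 σ, (∀ a, X ≠ Goal1.atom a) → ∀ Δ, A.map Goal1.atom ≠ X ::ₘ Δ := by
    intro X hX Δ h
    have hm : X ∈ A.map Goal1.atom := h ▸ Multiset.mem_cons_self _ _
    obtain ⟨a, _, ha⟩ := Multiset.mem_map.1 hm
    exact hX a ha.symm
  cases hA' with
  | oneR => exact absurd e (key _ (by simp) 0)
  | topR Γ => exact absurd e (key _ (by simp) _)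
  | parR G₁ G₂ Γ _ => exact absurd e (key _ (by simp) _)
  | wthR G₁ G₂ Γ _ _ => exact absurd e (key _ (by simp) _)
  | bc H G A' hP h =>
    rw [← Multiset.map_add] at e
    exact ⟨H, G, A', hP, sat1_complete P hI h _ _ (by rw [Multiset.singleton_add]),
      Multiset.map_injective atom_inj_s16 e⟩

theorem tp1_op1_subset (P : LO1Program σ) : TP1 P (OP1 P) ⊆ OP1 P := by
  rintro M ⟨H, G, A, hP, hs, rfl⟩
  have h := sat1_sound P hs
  rw [Multiset.singleton_add] at h
  have h' := LO1Prov.bc H G A hP h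
  rw [← Multiset.map_add] at h'
  exact h'

/-- Soundness and completeness of the LO₁ fixpoint semantics:
`O₁(P)` is the least fixpoint of `T¹_P`, i.e. `F₁(P) = O₁(P)`. -/
theorem fixpoint1_eq_operational1 (P : LO1Program σ) :
    IsLeast { I : Set (LOFact σ) | TP1 P I = I } (OP1 P) := by
  refine ⟨Set.Subset.antisymm (tp1_op1_subset P) (op1_subset P (tp1_op1_subset P)), ?_⟩
  intro I hI
  have hI' : TP1 P I = I := hI
  exact (op1_subset P hI'.subset).trans hI'.subset
end

section
/- For every flat LO program P in which every clause has at most one conjunct in the body (every clause is of the form H ⊸ H' or H ⊸ ⊤), every set of facts I, and every upward-closed set of facts J: if I ⊑ α(J), then there exists a natural number h such that α(T_P(I)) ⊑ α(T_P^h(J)), where T_P^h denotes the h-fold iterate of T_P. -/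
variable {σ : Type} [DecidableEq σ] [Fintype σ]

/-- A flat LO program: a finite set of clauses `H ⊸ H₁ & … & Hₙ` (a head multiset
together with the nonempty list of body conjunct multisets) or `H ⊸ ⊤` (empty list). -/
abbrev FlatProgram (σ : Type) := Finset (Multiset σ × List (Multiset σ))

/-- The specialized fixpoint operator for flat LO programs:
`T_P(I) = { ⟨H⟩ + (C₁⊔…⊔Cₙ) | H ⊸ H₁&…&Hₙ ∈ P, ⟨Hᵢ⟩+Cᵢ ∈ I } ∪ { ⟨H⟩ | H ⊸ ⊤ ∈ P }`,
where `∪` on multisets is the pointwise-maximum least upper bound. -/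
def TPflat (P : FlatProgram σ) (I : Set (Multiset σ)) : Set (Multiset σ) :=
  { M | ∃ H Ds, (H, Ds) ∈ P ∧
      ((Ds = [] ∧ M = H) ∨
       (Ds ≠ [] ∧ ∃ Cs : List (Multiset σ), Cs.length = Ds.length ∧
          (∀ p ∈ Ds.zip Cs, p.1 + p.2 ∈ I) ∧
          M = H + Cs.foldr (· ∪ ·) 0)) }

/-- The abstraction mapping a multiset to its underlying set
(each occurring atom kept with multiplicity one). -/
def alphaF (A : Multiset σ) : Multiset σ := A.dedup

/-- The abstraction lifted to sets of facts. -/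
def alphaSet (I : Set (Multiset σ)) : Set (Multiset σ) := alphaF '' I

theorem TPflat_single (P : FlatProgram σ) (H D C : Multiset σ) (hc : (H, [D]) ∈ P)
    (J : Set (Multiset σ)) (h : D + C ∈ J) : H + C ∈ TPflat P J := by
  refine ⟨H, [D], hc, Or.inr ⟨by simp, [C], rfl, ?_, ?_⟩⟩
  · intro p hp
    simp at hp
    subst hp
    exact h
  · simp

theorem TPflat_iter (P : FlatProgram σ) (H D : Multiset σ) (hc : (H, [D]) ∈ P) (n : ℕ) :
    ∀ (J : Set (Multiset σ)) (X : Multiset σ), n • D + X ∈ J →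
      n • H + X ∈ (TPflat P)^[n] J := by
  induction n with
  | zero => intro J X h; simpa using h
  | succ n ih =>
    intro J X h
    rw [Function.iterate_succ_apply]
    have h1 : D + (n • D + X) ∈ J := by
      have e : D + (n • D + X) = (n + 1) • D + X := by rw [succ_nsmul]; abel
      rw [e]; exact h
    have h2 := TPflat_single P H D _ hc J h1
    have h3 := ih (TPflat P J) (H + X) (by
      have e : n • D + (H + X) = H + (n • D + X) := by abel
      rw [e]; exact h2)
    have e : (n + 1) • H + X = n • H + (H + X) := by rw [succ_nsmul]; abel
    rw [e]; exact h3

theorem dedup_le_of_mem {A B : Multiset σ} (h : ∀ x ∈ A, x ∈ B) : A.dedup ≤ B.dedup :=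
  (Multiset.le_iff_subset (Multiset.nodup_dedup A)).2 (fun x hx => by
    simp at hx ⊢; exact h x hx)

/-- Key lemma for completeness of the DLP abstraction: for a flat LO program with
at most one conjunct in each clause body, if `I ⊑ α(J)` with `J` upward closed,
then one abstract step is covered by finitely many concrete steps. -/
theorem one_conjunct_completeness_lemma (P : FlatProgram σ)
    (hP : ∀ c ∈ P, c.2.length ≤ 1)
    (I J : Set (Multiset σ))
    (hJ : ∀ B ∈ J, ∀ B' : Multiset σ, B ≤ B' → B' ∈ J)
    (hIJ : sqle I (alphaSet J)) :
    ∃ h : ℕ, sqle (alphaSet (TPflat P I)) (alphaSet ((TPflat P)^[h] J)) := by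
  have key : ∀ S : Finset σ, ∃ k : ℕ, (∃ B ∈ J, ∀ x ∈ B, x ∈ S) →
      ∃ B ∈ J, (∀ x ∈ B, x ∈ S) ∧ Multiset.card B ≤ k := by
    intro S
    by_cases hS : ∃ B ∈ J, ∀ x ∈ B, x ∈ S
    · obtain ⟨B, hB, hBS⟩ := hS
      exact ⟨Multiset.card B, fun _ => ⟨B, hB, hBS, le_rfl⟩⟩
    · exact ⟨0, fun h => absurd h hS⟩
  choose f hf using key
  refine ⟨(∑ S, f S) + 1, ?_⟩
  rintro _ ⟨A, ⟨H, Ds, hc, hA⟩, rfl⟩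
  rcases hA with ⟨rfl, rfl⟩ | ⟨hne, Cs, hlen, hmem, rfl⟩
  · refine ⟨alphaF A, ⟨A, ?_, rfl⟩, le_rfl⟩
    rw [Function.iterate_succ_apply']
    exact ⟨A, [], hc, Or.inl ⟨rfl, rfl⟩⟩
  · have hl := hP _ hc
    obtain ⟨D, rfl⟩ : ∃ D, Ds = [D] := by
      match Ds, hne, hl with
      | [D], _, _ => exact ⟨D, rfl⟩
    obtain ⟨C, rfl⟩ : ∃ C, Cs = [C] := List.length_eq_one_iff.1 hlen
    have hI : D + C ∈ I := hmem (D, C) (by simp)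
    obtain ⟨_, ⟨B, hB, rfl⟩, hle⟩ := hIJ _ hI
    obtain ⟨B', hB', hS, hk⟩ := hf (D + C).toFinset ⟨B, hB, fun x hx =>
      Multiset.mem_toFinset.2 (Multiset.mem_of_le hle (Multiset.mem_dedup.2 hx))⟩
    have hsum : f (D + C).toFinset ≤ ∑ S, f S :=
      Finset.single_le_sum (fun _ _ => Nat.zero_le _) (Finset.mem_univ _)
    generalize hn : (∑ S, f S) + 1 = n
    have hBn : B' ≤ n • (D + C) := by
      rw [Multiset.le_iff_count]
      intro x
      rw [Multiset.count_nsmul]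
      by_cases hx : x ∈ B'
      · have h1 : 1 ≤ Multiset.count x (D + C) :=
          Multiset.one_le_count_iff_mem.2 (Multiset.mem_toFinset.1 (hS x hx))
        have h2 := Multiset.count_le_card x B'
        nlinarith
      · rw [Multiset.count_eq_zero_of_notMem hx]
        exact Nat.zero_le _
    have hJn := hJ _ hB' _ hBn
    rw [nsmul_add] at hJn
    refine ⟨_, ⟨_, TPflat_iter P H D hc n J _ hJn, rfl⟩, ?_⟩
    apply dedup_le_of_mem
    intro x hx
    rw [Multiset.mem_add] at hx
    have : x ∈ H ∨ x ∈ C := hx.imp Multiset.mem_of_mem_nsmul Multiset.mem_of_mem_nsmul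
    simpa using this
end

section
/- For every LO₁ program P and every constraint interpretation 𝕀 (a set of nonempty sets of facts, each member representing the solution set of a satisfiable constraint), den(S¹_P(𝕀)) = T¹_P(den(𝕀)): the denotation of the symbolic constraint operator applied to 𝕀 equals the ground LO₁ immediate-consequence operator applied to the denotation of 𝕀. -/
variable {σ : Type} [DecidableEq σ] [Fintype σ]

/-- The denotation of a constraint interpretation: union of the solution sets. -/
def denC (CI : Set (Set (Multiset σ))) : Set (Multiset σ) := ⋃₀ CI

/-- The symbolic constraint judgment `𝕀 ⊩₁ Δ[S]`, where constraints are identified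
with their (nonempty) sets of solutions. -/
inductive CSat (CI : Set (Set (Multiset σ))) : Ctx1 σ → Set (Multiset σ) → Prop
  | one : CSat CI ({Goal1.one} : Ctx1 σ) ({0} : Set (Multiset σ))
  | top (Δ : Ctx1 σ) : CSat CI (Goal1.top ::ₘ Δ) Set.univ
  | fact (A : LOFact σ) (ψ : Set (Multiset σ)) :
      ψ ∈ CI → { C : Multiset σ | C + A ∈ ψ }.Nonempty →
      CSat CI (A.map Goal1.atom) { C : Multiset σ | C + A ∈ ψ }
  | par (G₁ G₂ : Goal1 σ) (Δ : Ctx1 σ) (S : Set (Multiset σ)) :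
      CSat CI (G₁ ::ₘ G₂ ::ₘ Δ) S → CSat CI (Goal1.par G₁ G₂ ::ₘ Δ) S
  | wth (G₁ G₂ : Goal1 σ) (Δ : Ctx1 σ) (S₁ S₂ : Set (Multiset σ)) :
      (S₁ ∩ S₂).Nonempty →
      CSat CI (G₁ ::ₘ Δ) S₁ → CSat CI (G₂ ::ₘ Δ) S₂ →
      CSat CI (Goal1.wth G₁ G₂ ::ₘ Δ) (S₁ ∩ S₂)

/-- The symbolic constraint operator `S¹_P`. -/
def SP1 (P : LO1Program σ) (CI : Set (Set (Multiset σ))) : Set (Set (Multiset σ)) :=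
  { T | ∃ H G S, (H, G) ∈ P ∧ CSat CI ({G} : Ctx1 σ) S ∧
        T = (fun C : Multiset σ => H + C) '' S }

theorem CSat.sound {CI : Set (Set (Multiset σ))} {Δ : Ctx1 σ} {S : Set (Multiset σ)}
    (h : CSat CI Δ S) : ∀ A ∈ S, Sat1 (denC CI) Δ A := by
  induction h with
  | one =>
    intro A hA
    rw [Set.mem_singleton_iff] at hA
    subst hA
    exact Sat1.one
  | top Δ => exact fun A _ => Sat1.top Δ A
  | fact A ψ hψ _ =>
    intro C hC
    refine Sat1.fact A C ⟨ψ, hψ, ?_⟩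
    rw [add_comm]
    exact hC
  | par G₁ G₂ Δ S _ ih => exact fun A hA => Sat1.par _ _ _ _ (ih A hA)
  | wth G₁ G₂ Δ S₁ S₂ _ _ _ ih₁ ih₂ =>
    exact fun A hA => Sat1.wth _ _ _ _ (ih₁ A hA.1) (ih₂ A hA.2)

theorem Sat1.complete {CI : Set (Set (Multiset σ))} {Δ : Ctx1 σ} {A : LOFact σ}
    (h : Sat1 (denC CI) Δ A) : ∃ S, CSat CI Δ S ∧ A ∈ S := by
  induction h with
  | one => exact ⟨_, CSat.one, rfl⟩
  | top Δ A => exact ⟨_, CSat.top Δ, trivial⟩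
  | fact A A' h =>
    obtain ⟨ψ, hψ, hA⟩ := h
    rw [add_comm] at hA
    exact ⟨_, CSat.fact A ψ hψ ⟨A', hA⟩, hA⟩
  | par G₁ G₂ Δ A _ ih =>
    obtain ⟨S, hS, hA⟩ := ih
    exact ⟨S, CSat.par _ _ _ _ hS, hA⟩
  | wth G₁ G₂ Δ A _ _ ih₁ ih₂ =>
    obtain ⟨S₁, hS₁, hA₁⟩ := ih₁
    obtain ⟨S₂, hS₂, hA₂⟩ := ih₂
    exact ⟨_, CSat.wth _ _ _ _ _ ⟨A, hA₁, hA₂⟩ hS₁ hS₂, hA₁, hA₂⟩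

/-- Soundness and completeness of the constraint-based symbolic operator `S¹_P`
w.r.t. the ground LO₁ operator `T¹_P`: for every constraint interpretation `𝕀`
(all of whose members are nonempty), `den(S¹_P(𝕀)) = T¹_P(den(𝕀))`. -/
theorem denC_SP1_eq_TP1_denC (P : LO1Program σ) (CI : Set (Set (Multiset σ)))
    (hCI : ∀ S ∈ CI, S.Nonempty) :
    denC (SP1 P CI) = TP1 P (denC CI) := by
  ext M
  constructor
  · rintro ⟨T, ⟨H, G, S, hP, hS, rfl⟩, C, hC, rfl⟩
    exact ⟨H, G, C, hP, hS.sound C hC, rfl⟩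
  · rintro ⟨H, G, A, hP, hA, rfl⟩
    obtain ⟨S, hS, hAS⟩ := hA.complete
    exact ⟨_, ⟨H, G, S, hP, hS, rfl⟩, A, hAS, rfl⟩
end
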